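/- arXiv:2007.10894 — 4 statements merged into one kernel-verified Lean document; each statement's English description precedes it below -/
import Mathlib

section
/- Let V be a real inner product space and let x₀, x₁ ∈ V be orthonormal vectors. For φ ∈ ℝ set ψ_φ := cos φ · x₀ + sin φ · x₁. Fix θ ∈ ℝ, let O(v) := v − 2⟪x₁, v⟫ x₁ (the oracle reflection flipping the x₁-component) and R(v) := 2⟪ψ_θ, v⟫ ψ_θ − v (the reflection about ψ_θ), and let G := R ∘ O. Then for every natural number j, G^j ψ_θ = cos((2j+1)θ) · x₀ + sin((2j+1)θ) · x₁. -/
open Real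
open scoped RealInnerProductSpace

/-!
In the plane spanned by `x₀` and `x₁`, reflecting about the line at angle `α` sends the unit vector
at angle `φ` to the one at angle `2 * α - φ`. The oracle acts on this plane as the reflection about
the line at angle `0`, so a Grover step is a product of two reflections about lines at angle `θ`
to each other, i.e. the rotation by `2 * θ`.
-/

section Module

variable {V : Type*} [AddCommGroup V] [Module ℝ V]

/-- The point at angle `φ` on the ellipse with conjugate semi-diameters `x₀` and `x₁`; for
orthonormal `x₀`, `x₁` this is the unit vector at angle `φ` from `x₀` in the oriented plane they
span. -/
noncomputable def circlePoint (x₀ x₁ : V) (φ : ℝ) : V :=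
  cos φ • x₀ + sin φ • x₁

theorem two_mul_cos_smul_circlePoint_sub (x₀ x₁ : V) (α φ : ℝ) :
    (2 * cos (α - φ)) • circlePoint x₀ x₁ α - circlePoint x₀ x₁ φ =
      circlePoint x₀ x₁ (2 * α - φ) := by
  have hcos : cos (2 * α - φ) = 2 * cos (α - φ) * cos α - cos φ := by
    rw [mul_right_comm, two_mul_cos_mul_cos]
    ring_nf
  have hsin : sin (2 * α - φ) = 2 * cos (α - φ) * sin α - sin φ := by
    rw [mul_right_comm, two_mul_sin_mul_cos]
    ring_nf
  simp only [circlePoint, hcos, hsin]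
  module

end Module

section InnerProductSpace

variable {V : Type*} [NormedAddCommGroup V] [InnerProductSpace ℝ V] {x₀ x₁ : V}

theorem reflection_span_singleton_of_norm_eq_one {u : V} (hu : ‖u‖ = 1) (v : V) :
    (ℝ ∙ u).reflection v = (2 * ⟪u, v⟫) • u - v := by
  rw [Submodule.reflection_apply, Submodule.starProjection_unit_singleton ℝ hu]
  module

theorem reflection_orthogonal_span_singleton_of_norm_eq_one {u : V} (hu : ‖u‖ = 1) (v : V) :
    (ℝ ∙ u)ᗮ.reflection v = v - (2 * ⟪u, v⟫) • u := by
  rw [Submodule.reflection_orthogonal_apply, reflection_span_singleton_of_norm_eq_one hu, neg_sub]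

theorem inner_circlePoint_circlePoint (h₀ : ‖x₀‖ = 1) (h₁ : ‖x₁‖ = 1) (horth : ⟪x₀, x₁⟫ = 0)
    (α β : ℝ) : ⟪circlePoint x₀ x₁ α, circlePoint x₀ x₁ β⟫ = cos (α - β) := by
  simp only [circlePoint, inner_add_left, inner_add_right, real_inner_smul_left,
    real_inner_smul_right, real_inner_self_eq_norm_sq, h₀, h₁, horth, inner_eq_zero_symm.mp horth,
    cos_sub]
  ring

theorem norm_circlePoint (h₀ : ‖x₀‖ = 1) (h₁ : ‖x₁‖ = 1) (horth : ⟪x₀, x₁⟫ = 0) (φ : ℝ) :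
    ‖circlePoint x₀ x₁ φ‖ = 1 := by
  rw [norm_eq_sqrt_real_inner, inner_circlePoint_circlePoint h₀ h₁ horth, sub_self, cos_zero,
    sqrt_one]

theorem reflection_span_circlePoint (h₀ : ‖x₀‖ = 1) (h₁ : ‖x₁‖ = 1) (horth : ⟪x₀, x₁⟫ = 0)
    (α φ : ℝ) :
    (ℝ ∙ circlePoint x₀ x₁ α).reflection (circlePoint x₀ x₁ φ) =
      circlePoint x₀ x₁ (2 * α - φ) := by
  rw [reflection_span_singleton_of_norm_eq_one (norm_circlePoint h₀ h₁ horth α),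
    inner_circlePoint_circlePoint h₀ h₁ horth, two_mul_cos_smul_circlePoint_sub]

theorem reflection_orthogonal_circlePoint (horth : ⟪x₀, x₁⟫ = 0) (φ : ℝ) :
    (ℝ ∙ x₁)ᗮ.reflection (circlePoint x₀ x₁ φ) = circlePoint x₀ x₁ (-φ) := by
  have hfix : (ℝ ∙ x₁)ᗮ.reflection x₀ = x₀ :=
    Submodule.reflection_mem_subspace_eq_self
      (Submodule.mem_orthogonal_singleton_iff_inner_left.mpr horth)
  have hneg : (ℝ ∙ x₁)ᗮ.reflection x₁ = -x₁ :=
    Submodule.reflection_orthogonalComplement_singleton_eq_neg x₁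
  simp only [circlePoint, map_add, map_smul, hfix, hneg, cos_neg, sin_neg, smul_neg, neg_smul]

theorem semiconj_circlePoint_reflection_comp_reflection (h₀ : ‖x₀‖ = 1) (h₁ : ‖x₁‖ = 1)
    (horth : ⟪x₀, x₁⟫ = 0) (θ : ℝ) :
    Function.Semiconj (circlePoint x₀ x₁) (· + 2 * θ)
      ((ℝ ∙ circlePoint x₀ x₁ θ).reflection ∘ (ℝ ∙ x₁)ᗮ.reflection) := fun φ => by
  rw [Function.comp_apply, reflection_orthogonal_circlePoint horth,
    reflection_span_circlePoint h₀ h₁ horth, sub_neg_eq_add, add_comm]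

theorem iterate_reflection_comp_reflection_circlePoint (h₀ : ‖x₀‖ = 1) (h₁ : ‖x₁‖ = 1)
    (horth : ⟪x₀, x₁⟫ = 0) (θ φ : ℝ) (j : ℕ) :
    ((ℝ ∙ circlePoint x₀ x₁ θ).reflection ∘ (ℝ ∙ x₁)ᗮ.reflection)^[j] (circlePoint x₀ x₁ φ) =
      circlePoint x₀ x₁ (φ + j * (2 * θ)) := by
  have hrot := (semiconj_circlePoint_reflection_comp_reflection h₀ h₁ horth θ).iterate_right j φ
  rw [← hrot, add_right_iterate, nsmul_eq_mul]

end InnerProductSpace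

theorem grover_rotation {V : Type*} [NormedAddCommGroup V] [InnerProductSpace ℝ V]
    (x₀ x₁ : V) (h₀ : ‖x₀‖ = 1) (h₁ : ‖x₁‖ = 1) (horth : ⟪x₀, x₁⟫ = 0)
    (θ : ℝ) (ψ : ℝ → V)
    (hψ : ∀ φ : ℝ, ψ φ = Real.cos φ • x₀ + Real.sin φ • x₁)
    (O R G : V → V)
    (hO : ∀ v, O v = v - (2 * ⟪x₁, v⟫) • x₁)
    (hR : ∀ v, R v = (2 * ⟪ψ θ, v⟫) • ψ θ - v)
    (hG : G = R ∘ O) (j : ℕ) :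
    G^[j] (ψ θ) =
      Real.cos ((2 * j + 1) * θ) • x₀ + Real.sin ((2 * j + 1) * θ) • x₁ := by
  obtain rfl : ψ = circlePoint x₀ x₁ := funext hψ
  have hO_reflection : O = (ℝ ∙ x₁)ᗮ.reflection := funext fun v => by
    rw [hO, reflection_orthogonal_span_singleton_of_norm_eq_one h₁]
  have hR_reflection : R = (ℝ ∙ circlePoint x₀ x₁ θ).reflection := funext fun v => by
    rw [hR, reflection_span_singleton_of_norm_eq_one (norm_circlePoint h₀ h₁ horth θ)]
  have hangle : θ + j * (2 * θ) = (2 * j + 1) * θ := by ring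
  rw [hG, hO_reflection, hR_reflection,
    iterate_reflection_comp_reflection_circlePoint h₀ h₁ horth, hangle, circlePoint]
end

section
/- Let n ≥ 1 be a natural number, let N = 2^n, and in the real Euclidean space ℝ^N let u be the uniform superposition vector with every coordinate equal to 1/√N. Fix a target index t and let e_t be the corresponding standard basis vector. Define the oracle O(v) := v − 2⟪e_t, v⟫ e_t, the diffusion R(v) := 2⟪u, v⟫ u − v, and the Grover iterate G := R ∘ O. Then for every natural number j, ⟪e_t, G^j u⟫ = sin((2j+1)·θ), where θ = arcsin(√(1/2^n)). -/
open Real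
open scoped RealInnerProductSpace

/-!
Let `θ` be the angle with `sin θ = ⟪e, u⟫`. The oracle negates the `e`-component of a vector and the
diffusion preserves its `u`-component, so one Grover iteration acts on the pair
`(⟪e, v⟫, ⟪u, v⟫)` by an explicit linear recursion. The pair `(sin ((2 j + 1) θ), cos (2 j θ))`
obeys the same recursion, by the product-to-sum formulas.
-/

section AmplitudeAmplification

variable {E : Type*} [NormedAddCommGroup E] [InnerProductSpace ℝ E] {e u : E}

/-- The Grover oracle marking `e`: for a unit vector `e`, the reflection in the hyperplane `eᗮ`. -/
noncomputable def groverOracle (e v : E) : E :=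
  v - (2 * ⟪e, v⟫) • e

/-- The Grover diffusion about `u`: for a unit vector `u`, the reflection in the line `ℝ ∙ u`. -/
noncomputable def groverDiffusion (u v : E) : E :=
  (2 * ⟪u, v⟫) • u - v

/-- One Grover iteration with target `e` and initial state `u`: for unit vectors, a rotation of the
plane they span by twice the angle between `u` and `eᗮ`. -/
noncomputable def groverIterate (e u : E) : E → E :=
  groverDiffusion u ∘ groverOracle e

theorem inner_groverOracle (he : ‖e‖ = 1) (v : E) :
    ⟪e, groverOracle e v⟫ = -⟪e, v⟫ := by
  rw [groverOracle, inner_sub_right, real_inner_smul_right, inner_self_eq_one_of_norm_eq_one he]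
  ring

theorem inner_groverDiffusion (hu : ‖u‖ = 1) (v : E) :
    ⟪u, groverDiffusion u v⟫ = ⟪u, v⟫ := by
  rw [groverDiffusion, inner_sub_right, real_inner_smul_right, inner_self_eq_one_of_norm_eq_one hu]
  ring

theorem inner_initial_groverIterate (e : E) (hu : ‖u‖ = 1) (v : E) :
    ⟪u, groverIterate e u v⟫ = ⟪u, v⟫ - 2 * ⟪e, v⟫ * ⟪e, u⟫ := by
  rw [groverIterate, Function.comp_apply, inner_groverDiffusion hu, groverOracle,
    inner_sub_right, real_inner_smul_right, real_inner_comm e u]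

theorem inner_target_groverIterate (he : ‖e‖ = 1) (hu : ‖u‖ = 1) (v : E) :
    ⟪e, groverIterate e u v⟫ = ⟪e, v⟫ + 2 * ⟪e, u⟫ * ⟪u, groverIterate e u v⟫ := by
  rw [groverIterate, Function.comp_apply, inner_groverDiffusion hu, groverDiffusion,
    inner_sub_right, real_inner_smul_right, inner_groverOracle he]
  ring

theorem inner_iterate_groverIterate (he : ‖e‖ = 1) (hu : ‖u‖ = 1) {θ : ℝ} (hθ : sin θ = ⟪e, u⟫)
    (j : ℕ) :
    ⟪e, (groverIterate e u)^[j] u⟫ = sin ((2 * j + 1) * θ) ∧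
      ⟪u, (groverIterate e u)^[j] u⟫ = cos (2 * j * θ) := by
  induction j with
  | zero => simp [hθ, hu]
  | succ k ih =>
    obtain ⟨ih_target, ih_initial⟩ := ih
    rw [Function.iterate_succ_apply']
    have initial_eq : ⟪u, groverIterate e u ((groverIterate e u)^[k] u)⟫ =
        cos (2 * (k + 1 : ℕ) * θ) := by
      rw [inner_initial_groverIterate e hu, ih_target, ih_initial, ← hθ, two_mul_sin_mul_sin]
      push_cast
      ring_nf
    have target_eq : ⟪e, groverIterate e u ((groverIterate e u)^[k] u)⟫ =
        sin ((2 * (k + 1 : ℕ) + 1) * θ) := by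
      rw [inner_target_groverIterate he hu, initial_eq, ih_target, ← hθ, two_mul_sin_mul_cos,
        ← neg_sub _ θ, sin_neg]
      push_cast
      ring_nf
    exact ⟨target_eq, initial_eq⟩

theorem uniform_amplification_general (he : ‖e‖ = 1) (hu : ‖u‖ = 1) (j : ℕ) :
    ⟪e, (groverIterate e u)^[j] u⟫ = sin ((2 * j + 1) * arcsin ⟪e, u⟫) := by
  have sin_arcsin_inner : sin (arcsin ⟪e, u⟫) = ⟪e, u⟫ :=
    sin_arcsin (neg_one_le_real_inner_of_norm_eq_one he hu) (real_inner_le_one_of_norm_eq_one he hu)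
  exact (inner_iterate_groverIterate he hu sin_arcsin_inner j).1

end AmplitudeAmplification

section UniformSuperposition

variable (ι : Type*) [Fintype ι]

/-- The uniform superposition of the basis states indexed by `ι`, a unit vector as soon as `ι` is
nonempty. -/
noncomputable def uniformSuperposition : EuclideanSpace ℝ ι :=
  WithLp.toLp 2 fun _ ↦ 1 / √(Fintype.card ι)

theorem norm_uniformSuperposition [Nonempty ι] : ‖uniformSuperposition ι‖ = 1 := by
  simp [uniformSuperposition, EuclideanSpace.norm_eq]

variable {ι}

theorem inner_single_uniformSuperposition [DecidableEq ι] (t : ι) :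
    ⟪EuclideanSpace.single t (1 : ℝ), uniformSuperposition ι⟫ = √(1 / Fintype.card ι) := by
  simp [uniformSuperposition, EuclideanSpace.inner_single_left]

end UniformSuperposition

theorem uniform_amplification (n : ℕ) (hn : 1 ≤ n) (t : Fin (2 ^ n))
    (u : EuclideanSpace ℝ (Fin (2 ^ n)))
    (hu : ∀ i, u i = 1 / Real.sqrt (2 ^ n))
    (O R G : EuclideanSpace ℝ (Fin (2 ^ n)) → EuclideanSpace ℝ (Fin (2 ^ n)))
    (hO : ∀ v, O v = v - (2 * ⟪EuclideanSpace.single t (1 : ℝ), v⟫) •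
      EuclideanSpace.single t (1 : ℝ))
    (hR : ∀ v, R v = (2 * ⟪u, v⟫) • u - v)
    (hG : G = R ∘ O) (j : ℕ) :
    ⟪EuclideanSpace.single t (1 : ℝ), G^[j] u⟫ =
      Real.sin ((2 * j + 1) * Real.arcsin (Real.sqrt (1 / 2 ^ n))) := by
  obtain rfl : u = uniformSuperposition (Fin (2 ^ n)) := by
    ext i
    simp [hu, uniformSuperposition]
  have hG_grover : G = groverIterate (EuclideanSpace.single t 1) (uniformSuperposition _) :=
    hG.trans (congrArg₂ (· ∘ ·) (funext hR) (funext hO))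
  simpa [hG_grover, inner_single_uniformSuperposition] using
    uniform_amplification_general (e := EuclideanSpace.single t (1 : ℝ)) (by simp)
      (norm_uniformSuperposition (Fin (2 ^ n))) j
end

section
/- Let n be a natural number and k a natural number with 1 ≤ k ≤ n−1, and set ω_max := 2·arctan(√(k/(n−k))). Then a_{n,k}(ω_max) = √( k^k · (n−k)^{n−k} / n^n ), and for every ω ∈ [0, π], a_{n,k}(ω) ≤ a_{n,k}(ω_max); i.e., ω_max maximizes a_{n,k} on [0, π]. -/
open Real

/-!
Since `sin² + cos² = 1`, the square of `sin θ ^ k * cos θ ^ m` has the form `x ^ k * y ^ m` with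
`x + y = 1`. The weighted AM-GM inequality applied to `x / k` and `y / m` bounds it by
`k ^ k * m ^ m / (k + m) ^ (k + m)`, and `tan θ ^ 2 = k / m` is the equality case `x / k = y / m`.
-/

theorem prod_div_rpow_le_sum_div_sum_rpow {ι : Type*} (s : Finset ι) {w x : ι → ℝ}
    (hw : ∀ i ∈ s, 0 ≤ w i) (hx : ∀ i ∈ s, 0 ≤ x i) :
    ∏ i ∈ s, (x i / w i) ^ w i ≤ ((∑ i ∈ s, x i) / ∑ i ∈ s, w i) ^ ∑ i ∈ s, w i := by
  have ratio_nonneg : ∀ i ∈ s, 0 ≤ x i / w i := fun i hi => div_nonneg (hx i hi) (hw i hi)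
  have prod_nonneg : 0 ≤ ∏ i ∈ s, (x i / w i) ^ w i :=
    Finset.prod_nonneg fun i hi => rpow_nonneg (ratio_nonneg i hi) _
  rcases (Finset.sum_nonneg hw).eq_or_lt with sum_eq_zero | sum_pos
  · have weights_eq_zero := (Finset.sum_eq_zero_iff_of_nonneg hw).1 sum_eq_zero.symm
    rw [← sum_eq_zero, rpow_zero]
    exact (Finset.prod_eq_one fun i hi => by rw [weights_eq_zero i hi, rpow_zero]).le
  · have weighted_sum_le : ∑ i ∈ s, w i * (x i / w i) ≤ ∑ i ∈ s, x i :=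
      -- Only an inequality, because `x i / w i = 0` where `w i = 0`.
      Finset.sum_le_sum fun i hi => by
        rw [mul_div_left_comm]
        exact mul_le_of_le_one_right (hx i hi) (div_self_le_one _)
    rw [← rpow_inv_le_iff_of_pos prod_nonneg (div_nonneg (Finset.sum_nonneg hx) sum_pos.le) sum_pos]
    calc (∏ i ∈ s, (x i / w i) ^ w i) ^ (∑ i ∈ s, w i)⁻¹
        ≤ (∑ i ∈ s, w i * (x i / w i)) / ∑ i ∈ s, w i :=
          geom_mean_le_arith_mean s w _ hw sum_pos ratio_nonneg
      _ ≤ (∑ i ∈ s, x i) / ∑ i ∈ s, w i := by gcongr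

theorem div_pow_mul_div_pow_le_add_div_add_pow (k m : ℕ) {x y : ℝ} (hx : 0 ≤ x) (hy : 0 ≤ y) :
    (x / k) ^ k * (y / m) ^ m ≤ ((x + y) / (k + m)) ^ (k + m) := by
  have h := prod_div_rpow_le_sum_div_sum_rpow Finset.univ (w := ![(k : ℝ), m]) (x := ![x, y])
    (by simp [Fin.forall_fin_two]) (by simp [Fin.forall_fin_two, hx, hy])
  simpa [Fin.prod_univ_two, Fin.sum_univ_two, ← Nat.cast_add, rpow_natCast] using h

theorem pow_mul_pow_le_of_add_eq_one (k m : ℕ) {x y : ℝ} (hx : 0 ≤ x) (hy : 0 ≤ y)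
    (hxy : x + y = 1) :
    x ^ k * y ^ m ≤ (k : ℝ) ^ k * (m : ℝ) ^ m / ((k : ℝ) + m) ^ (k + m) := by
  have natCast_pow_self_pos (j : ℕ) : (0 : ℝ) < (j : ℝ) ^ j := by exact_mod_cast Nat.pow_self_pos
  have h := div_pow_mul_div_pow_le_add_div_add_pow k m hx hy
  rw [hxy, div_pow, div_pow, div_pow, one_pow, div_mul_div_comm,
    div_le_iff₀ (mul_pos (natCast_pow_self_pos k) (natCast_pow_self_pos m))] at h
  rwa [one_div_mul_eq_div] at h

theorem abs_sin_pow_mul_cos_pow_le (k m : ℕ) (θ : ℝ) :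
    |sin θ ^ k * cos θ ^ m| ≤ √((k : ℝ) ^ k * (m : ℝ) ^ m / ((k : ℝ) + m) ^ (k + m)) := by
  apply abs_le_sqrt
  calc (sin θ ^ k * cos θ ^ m) ^ 2 = (sin θ ^ 2) ^ k * (cos θ ^ 2) ^ m := by ring
    _ ≤ _ := pow_mul_pow_le_of_add_eq_one k m (sq_nonneg _) (sq_nonneg _) (sin_sq_add_cos_sq θ)

theorem cos_sq_arctan_sqrt_div {a b : ℝ} (ha : 0 ≤ a) (hb : 0 < b) :
    cos (arctan √(a / b)) ^ 2 = b / (a + b) := by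
  rw [cos_sq_arctan, sq_sqrt (by positivity)]
  field_simp
  ring

theorem sin_sq_arctan_sqrt_div {a b : ℝ} (ha : 0 ≤ a) (hb : 0 < b) :
    sin (arctan √(a / b)) ^ 2 = a / (a + b) := by
  rw [sin_sq, cos_sq_arctan_sqrt_div ha hb]
  field_simp
  ring

theorem sin_pow_mul_cos_pow_arctan_sqrt_div (k : ℕ) {m : ℕ} (hm : 0 < m) :
    sin (arctan √((k : ℝ) / m)) ^ k * cos (arctan √((k : ℝ) / m)) ^ m =
      √((k : ℝ) ^ k * (m : ℝ) ^ m / ((k : ℝ) + m) ^ (k + m)) := by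
  have hm' : (0 : ℝ) < m := Nat.cast_pos.2 hm
  set θ := arctan √((k : ℝ) / m)
  have value_nonneg : 0 ≤ sin θ ^ k * cos θ ^ m :=
    mul_nonneg (pow_nonneg (sin_arctan_nonneg.2 (sqrt_nonneg _)) k)
      (pow_nonneg (cos_arctan_pos _).le m)
  have sq_eq : (sin θ ^ k * cos θ ^ m) ^ 2 =
      (k : ℝ) ^ k * (m : ℝ) ^ m / ((k : ℝ) + m) ^ (k + m) :=
    calc (sin θ ^ k * cos θ ^ m) ^ 2 = (sin θ ^ 2) ^ k * (cos θ ^ 2) ^ m := by ring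
      _ = ((k : ℝ) / (k + m)) ^ k * ((m : ℝ) / (k + m)) ^ m := by
        rw [sin_sq_arctan_sqrt_div k.cast_nonneg hm', cos_sq_arctan_sqrt_div k.cast_nonneg hm']
      _ = _ := by rw [div_pow, div_pow, div_mul_div_comm, ← pow_add]
  rw [← sq_eq, sqrt_sq value_nonneg]

theorem omega_max_maximizes_general {n k : ℕ} (hkn : k < n) {ωmax : ℝ}
    (hωmax : ωmax = 2 * arctan √((k : ℝ) / ((n - k : ℕ) : ℝ))) :
    sin (ωmax / 2) ^ k * cos (ωmax / 2) ^ (n - k) =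
      √(((k : ℝ) ^ k * ((n - k : ℕ) : ℝ) ^ (n - k)) / (n : ℝ) ^ n) ∧
    ∀ ω : ℝ, |sin (ω / 2) ^ k * cos (ω / 2) ^ (n - k)| ≤
      sin (ωmax / 2) ^ k * cos (ωmax / 2) ^ (n - k) := by
  obtain ⟨m, rfl⟩ := Nat.exists_eq_add_of_le hkn.le
  rw [Nat.add_sub_cancel_left] at hωmax ⊢
  have half_eq : ωmax / 2 = arctan √((k : ℝ) / m) := by rw [hωmax]; ring
  have value_eq := sin_pow_mul_cos_pow_arctan_sqrt_div k (m := m) (by omega)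
  rw [half_eq, value_eq, Nat.cast_add]
  exact ⟨rfl, fun ω => abs_sin_pow_mul_cos_pow_le k m (ω / 2)⟩

theorem omega_max_maximizes (n k : ℕ) (hk1 : 1 ≤ k) (hk2 : k ≤ n - 1)
    (ωmax : ℝ)
    (hωmax : ωmax = 2 * Real.arctan (Real.sqrt ((k : ℝ) / ((n - k : ℕ) : ℝ)))) :
    Real.sin (ωmax / 2) ^ k * Real.cos (ωmax / 2) ^ (n - k) =
      Real.sqrt (((k : ℝ) ^ k * ((n - k : ℕ) : ℝ) ^ (n - k)) / (n : ℝ) ^ n) ∧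
    ∀ ω ∈ Set.Icc (0 : ℝ) Real.pi,
      Real.sin (ω / 2) ^ k * Real.cos (ω / 2) ^ (n - k) ≤
        Real.sin (ωmax / 2) ^ k * Real.cos (ωmax / 2) ^ (n - k) := by
  obtain ⟨value_eq, abs_le⟩ := omega_max_maximizes_general (by omega : k < n) hωmax
  exact ⟨value_eq, fun ω _ => le_of_abs_le (abs_le ω)⟩
end

section
/- Let n ≥ 1 and 0 ≤ k ≤ n be natural numbers. Define θ_max := arcsin(√( k^k · (n−k)^{n−k} / n^n )) (with the convention 0^0 = 1) and θ_uniform := arcsin(√(1/2^n)). Then θ_max ≥ θ_uniform, and consequently ⌈π/(4·θ_max) − 1/2⌉ ≤ ⌈π/(4·θ_uniform) − 1/2⌉; i.e., the ideal number of binomial Grover iterations for a Hamming-weight-k target is at most the number for the uniform version. -/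
open Real

/-!
The likelihood `ω ^ k * (1 - ω) ^ (n - k)` of a fixed string of Hamming weight `k` is maximal at
`ω = k / n`, by Gibbs' inequality in its multiplicative form `∏ pᵢ ^ qᵢ ≤ ∏ qᵢ ^ qᵢ`, and uniform
search is the choice `ω = 1 / 2`. Hence the optimal success probability, and with it the initial
angle, is at least the uniform one, while the number of iterations decreases as the angle grows.
-/

theorem rpow_le_rpow_self_mul_exp_sub {x a : ℝ} (hx : 0 ≤ x) (ha : 0 ≤ a) :
    x ^ a ≤ a ^ a * exp (x - a) := by
  rcases ha.eq_or_lt with rfl | ha_pos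
  · simpa using hx
  have tangent_bound : x ≤ a * exp (x / a - 1) := by
    rw [← div_le_iff₀' ha_pos]
    linarith [add_one_le_exp (x / a - 1)]
  calc x ^ a ≤ (a * exp (x / a - 1)) ^ a := rpow_le_rpow hx tangent_bound ha
    _ = a ^ a * exp ((x / a - 1) * a) := by rw [mul_rpow ha (exp_nonneg _), ← exp_mul]
    _ = a ^ a * exp (x - a) := by rw [sub_mul, div_mul_cancel₀ x ha_pos.ne', one_mul]

theorem prod_rpow_le_prod_rpow_self {ι : Type*} {s : Finset ι} {p q : ι → ℝ}
    (hp : ∀ i ∈ s, 0 ≤ p i) (hq : ∀ i ∈ s, 0 ≤ q i) (hpq : ∑ i ∈ s, p i ≤ ∑ i ∈ s, q i) :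
    ∏ i ∈ s, p i ^ q i ≤ ∏ i ∈ s, q i ^ q i := by
  have prod_self_nonneg : 0 ≤ ∏ i ∈ s, q i ^ q i :=
    Finset.prod_nonneg fun i hi ↦ rpow_nonneg (hq i hi) _
  calc ∏ i ∈ s, p i ^ q i ≤ ∏ i ∈ s, q i ^ q i * exp (p i - q i) :=
        Finset.prod_le_prod (fun i hi ↦ rpow_nonneg (hp i hi) _)
          fun i hi ↦ rpow_le_rpow_self_mul_exp_sub (hp i hi) (hq i hi)
    _ = (∏ i ∈ s, q i ^ q i) * exp (∑ i ∈ s, p i - ∑ i ∈ s, q i) := by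
        rw [Finset.prod_mul_distrib, ← exp_sum, Finset.sum_sub_distrib]
    _ ≤ ∏ i ∈ s, q i ^ q i :=
        mul_le_of_le_one_right prod_self_nonneg (exp_le_one_iff.2 (sub_nonpos.2 hpq))

theorem pow_mul_pow_le_pow_self_mul_pow_self {x y : ℝ} {k m : ℕ} (hx : 0 ≤ x) (hy : 0 ≤ y)
    (hxy : x + y ≤ k + m) : x ^ k * y ^ m ≤ (k : ℝ) ^ k * (m : ℝ) ^ m := by
  have gibbs := prod_rpow_le_prod_rpow_self (s := Finset.univ) (p := ![x, y]) (q := ![(k : ℝ), m])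
    (by simp [Fin.forall_fin_two, hx, hy]) (by simp [Fin.forall_fin_two])
    (by simpa [Fin.sum_univ_two] using hxy)
  simpa [Fin.prod_univ_two] using gibbs

theorem pow_mul_one_sub_pow_le {n k : ℕ} (hk : k ≤ n) {ω : ℝ} (hω₀ : 0 ≤ ω) (hω₁ : ω ≤ 1) :
    ω ^ k * (1 - ω) ^ (n - k) ≤
      ((k : ℝ) ^ k * ((n - k : ℕ) : ℝ) ^ (n - k)) / (n : ℝ) ^ n := by
  have n_pow_self_pos : (0 : ℝ) < (n : ℝ) ^ n := by exact_mod_cast Nat.pow_self_pos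
  rw [le_div_iff₀ n_pow_self_pos]
  calc ω ^ k * (1 - ω) ^ (n - k) * (n : ℝ) ^ n = (n * ω) ^ k * (n * (1 - ω)) ^ (n - k) := by
        rw [← pow_mul_pow_sub (n : ℝ) hk, mul_pow, mul_pow]
        ring
    _ ≤ (k : ℝ) ^ k * ((n - k : ℕ) : ℝ) ^ (n - k) := by
        refine pow_mul_pow_le_pow_self_mul_pow_self (by positivity)
          (mul_nonneg n.cast_nonneg (sub_nonneg.2 hω₁)) (le_of_eq ?_)
        rw [Nat.cast_sub hk]
        ring

/-- The ideal number of Grover iterations from the initial angle `0 < θ`: after `j` of them the angle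
is `(2 * j + 1) * θ`, and this is the least integer `j` for which it reaches `π / 2`. -/
noncomputable def groverIterations (θ : ℝ) : ℤ :=
  ⌈π / (4 * θ) - 1 / 2⌉

theorem groverIterations_antitoneOn : AntitoneOn groverIterations (Set.Ioi 0) := by
  intro θ (hθ : 0 < θ) θ' _ hle
  unfold groverIterations
  gcongr

theorem ideal_iterations_le_uniform (n k : ℕ) (hn : 1 ≤ n) (hk : k ≤ n)
    (θmax θuniform : ℝ)
    (hθmax : θmax = Real.arcsin
      (Real.sqrt (((k : ℝ) ^ k * ((n - k : ℕ) : ℝ) ^ (n - k)) / (n : ℝ) ^ n)))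
    (hθuniform : θuniform = Real.arcsin (Real.sqrt (1 / 2 ^ n))) :
    θuniform ≤ θmax ∧
      ⌈Real.pi / (4 * θmax) - 1 / 2⌉ ≤ ⌈Real.pi / (4 * θuniform) - 1 / 2⌉ := by
  have uniform_likelihood : (1 / 2 : ℝ) ^ k * (1 - 1 / 2) ^ (n - k) = 1 / 2 ^ n := by
    rw [sub_half, pow_mul_pow_sub _ hk, one_div_pow]
  have angle_le : θuniform ≤ θmax := by
    rw [hθmax, hθuniform, ← uniform_likelihood]
    exact monotone_arcsin <| sqrt_le_sqrt <|
      pow_mul_one_sub_pow_le hk one_half_pos.le one_half_lt_one.le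
  have uniform_pos : 0 < θuniform := by
    rw [hθuniform, arcsin_pos]
    positivity
  exact ⟨angle_le, groverIterations_antitoneOn uniform_pos (uniform_pos.trans_le angle_le) angle_le⟩
end
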